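/- Let d ≥ 1, let h ≥ 4 be a Hadamard order with Hadamard matrix A, and for B ∈ {−1,1}^{h×d} define C by c_{ij} = sgn((AᵀB)_{ji}), F = C A⁻¹ B, and G = F + I. Then there exists a choice of B ∈ {−1,1}^{h×d} such that det(G) ≥ μ(h)^d·(1 − d²/μ(h)). -/

import Mathlib

open Matrix

/-- The `±1` sign function: `sgn x = 1` if `x ≥ 0`, `−1` if `x < 0`. -/
noncomputable def sgn (x : ℝ) : ℝ := if 0 ≤ x then 1 else -1

/-- The `h × d` sign matrix corresponding to a Boolean matrix `b`. -/
noncomputable def signMat {h d : ℕ} (b : Fin h → Fin d → Bool) :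
    Matrix (Fin h) (Fin d) ℝ :=
  Matrix.of fun i j => if b i j then (1 : ℝ) else -1

/-- The matrix `C` with `c_{ij} = sgn((Aᵀ B)_{ji})`. -/
noncomputable def Cmat {h d : ℕ} (A : Matrix (Fin h) (Fin h) ℝ)
    (B : Matrix (Fin h) (Fin d) ℝ) : Matrix (Fin d) (Fin h) ℝ :=
  Matrix.of fun i j => sgn ((Aᵀ * B) j i)

/-- The matrix `F = C A⁻¹ B`. -/
noncomputable def Fmat {h d : ℕ} (A : Matrix (Fin h) (Fin h) ℝ)
    (B : Matrix (Fin h) (Fin d) ℝ) : Matrix (Fin d) (Fin d) ℝ :=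
  Cmat A B * A⁻¹ * B

/-- Expectation of `f(B)`, averaged over the `2^(h·d)` equally likely
`h × d` matrices `B` with entries in `{−1, 1}`. -/
noncomputable def expec (h d : ℕ) (f : Matrix (Fin h) (Fin d) ℝ → ℝ) : ℝ :=
  (∑ b : Fin h → Fin d → Bool, f (signMat b)) / 2 ^ (h * d)


/-- `μ(h) = 1 + 2^{−h} h binom(h, h/2)`. -/
noncomputable def mu (h : ℕ) : ℝ :=
  1 + (2 : ℝ) ^ (-(h : ℤ)) * h * (h.choose (h / 2) : ℝ)


theorem det_ge_of_coercive (δ : ℝ) (hδ : 0 < δ) : ∀ (n : ℕ) (M : Matrix (Fin n) (Fin n) ℝ),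
    (∀ x : Fin n → ℝ, δ * (x ⬝ᵥ x) ≤ x ⬝ᵥ (M *ᵥ x)) → δ ^ n ≤ M.det := by
  intro n
  induction n with
  | zero => intro M _; simp
  | succ n ih =>
    intro M hM
    let e : Unit ⊕ Fin n ≃ Fin (n+1) :=
      (Equiv.sumComm _ _).trans ((Equiv.optionEquivSumPUnit (Fin n)).symm.trans (finSuccEquiv n).symm)
    have he1 : ∀ u, e (Sum.inl u) = 0 := by intro u; simp [e]
    have he2 : ∀ i, e (Sum.inr i) = Fin.succ i := by intro i; simp [e]
    have ha : δ ≤ M 0 0 := by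
      have := hM (Pi.single 0 1)
      simpa using this
    have ha0 : M 0 0 ≠ 0 := ne_of_gt (lt_of_lt_of_le hδ ha)
    let S : Matrix (Fin n) (Fin n) ℝ := Matrix.of fun i j =>
      M i.succ j.succ - M i.succ 0 * M 0 j.succ / M 0 0
    have hdet : M.det = M 0 0 * S.det := by
      rw [← Matrix.det_submatrix_equiv_self e M, ← Matrix.fromBlocks_toBlocks (M.submatrix e e)]
      let D : Matrix Unit Unit ℝ := (M.submatrix e e).toBlocks₁₁
      have hD : IsUnit D.det := by
        simp [D, Matrix.toBlocks₁₁, he1, ha0]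
      have : Invertible D := Matrix.invertibleOfIsUnitDet D hD
      rw [Matrix.det_fromBlocks₁₁]
      congr 1
      · simp [Matrix.toBlocks₁₁, he1]
      · congr 1
        ext i j
        simp [Matrix.mul_apply, S]
        simp [Matrix.toBlocks₁₁, Matrix.toBlocks₂₁, Matrix.toBlocks₂₂, Matrix.toBlocks₁₂, he1, he2]
        ring
    have hS : ∀ x : Fin n → ℝ, δ * (x ⬝ᵥ x) ≤ x ⬝ᵥ (S *ᵥ x) := by
      intro x
      set r : ℝ := ∑ j, M 0 j.succ * x j with hr
      have h1 := hM (Fin.cons (-(r / M 0 0)) x)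
      have h2 : (Fin.cons (-(r / M 0 0)) x : Fin (n+1) → ℝ) ⬝ᵥ Fin.cons (-(r / M 0 0)) x
          = (r / M 0 0)^2 + x ⬝ᵥ x := by
        simp [dotProduct, Fin.sum_univ_succ]; ring
      have h3 : (Fin.cons (-(r / M 0 0)) x : Fin (n+1) → ℝ) ⬝ᵥ (M *ᵥ Fin.cons (-(r / M 0 0)) x)
          = x ⬝ᵥ (S *ᵥ x) := by
        simp only [dotProduct, Fin.sum_univ_succ, mulVec, Fin.cons_zero, Fin.cons_succ, ← hr]
        have : M 0 0 * -(r / M 0 0) + r = 0 := by field_simp; ring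
        rw [this]
        simp only [mul_zero, zero_add]
        refine Finset.sum_congr rfl fun i _ => ?_
        congr 1
        simp only [S, Matrix.of_apply, sub_mul, Finset.sum_sub_distrib]
        have : ∑ j, M i.succ 0 * M 0 j.succ / M 0 0 * x j = M i.succ 0 / M 0 0 * r := by
          rw [hr, Finset.mul_sum]
          refine Finset.sum_congr rfl fun j _ => ?_
          ring
        rw [this]; ring
      rw [h2, h3] at h1
      nlinarith [mul_nonneg hδ.le (sq_nonneg (r / M 0 0))]
    have h5 := ih S hS
    rw [hdet, pow_succ, mul_comm]
    exact mul_le_mul ha h5 (by positivity) (by linarith)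

noncomputable def sg (b : Bool) : ℝ := if b then 1 else -1

theorem sg_sq (b : Bool) : sg b * sg b = 1 := by cases b <;> simp [sg]
theorem sg_not (b : Bool) : sg (!b) = - sg b := by cases b <;> simp [sg]

def flp {n : ℕ} (i : Fin n) (b : Fin n → Bool) : Fin n → Bool := Function.update b i (!b i)

theorem flp_flp {n : ℕ} (i : Fin n) : Function.Involutive (flp i) := by
  intro b; ext j; by_cases h : j = i
  · subst h; simp [flp]
  · simp [flp, h]

theorem sum_flp {n : ℕ} (i : Fin n) (g : (Fin n → Bool) → ℝ) :
    ∑ b, g (flp i b) = ∑ b, g b :=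
  Equiv.sum_comp (flp_flp i).toPerm g

noncomputable def chi {n : ℕ} (S : Finset (Fin n)) (b : Fin n → Bool) : ℝ := ∏ i ∈ S, sg (b i)

noncomputable def four {n : ℕ} (f : (Fin n → Bool) → ℝ) (S : Finset (Fin n)) : ℝ :=
  ∑ b, f b * chi S b

theorem chi_kernel {n : ℕ} (b b' : Fin n → Bool) :
    ∑ S : Finset (Fin n), chi S b * chi S b' = if b = b' then (2:ℝ)^n else 0 := by
  have : ∑ S : Finset (Fin n), chi S b * chi S b' = ∏ i, (1 + sg (b i) * sg (b' i)) := by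
    rw [Finset.prod_one_add]
    simp [chi, Finset.prod_mul_distrib]
  rw [this]
  split_ifs with h
  · subst h
    simp [sg_sq]; norm_num
  · obtain ⟨i, hi⟩ := Function.ne_iff.mp h
    apply Finset.prod_eq_zero (Finset.mem_univ i)
    revert hi
    cases b i <;> cases b' i <;> simp [sg]

theorem parseval {n : ℕ} (f : (Fin n → Bool) → ℝ) :
    ∑ S, four f S ^ 2 = 2 ^ n * ∑ b, f b ^ 2 := by
  have : ∀ S, four f S ^ 2 = ∑ b, ∑ b', f b * f b' * (chi S b * chi S b') := by
    intro S
    rw [sq, four, Finset.sum_mul_sum]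
    refine Finset.sum_congr rfl fun b _ => Finset.sum_congr rfl fun b' _ => ?_
    ring
  simp_rw [this]
  rw [Finset.sum_comm]
  rw [Finset.mul_sum]
  refine Finset.sum_congr rfl fun b _ => ?_
  rw [Finset.sum_comm]
  simp_rw [← Finset.mul_sum, chi_kernel]
  simp; ring

theorem chi_flp {n : ℕ} (i : Fin n) (S : Finset (Fin n)) (b) :
    chi S (flp i b) = if i ∈ S then - chi S b else chi S b := by
  unfold chi
  split_ifs with h
  · rw [← Finset.mul_prod_erase _ _ h, ← Finset.mul_prod_erase _ _ h]
    have : ∏ x ∈ S.erase i, sg (flp i b x) = ∏ x ∈ S.erase i, sg (b x) := by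
      refine Finset.prod_congr rfl fun x hx => ?_
      simp [flp, Finset.ne_of_mem_erase hx]
    rw [this]; simp [flp, sg_not]
  · refine Finset.prod_congr rfl fun x hx => ?_
    have : x ≠ i := by rintro rfl; exact h hx
    simp [flp, this]

theorem four_diff {n : ℕ} (f : (Fin n → Bool) → ℝ) (i : Fin n) (S : Finset (Fin n)) :
    four (fun b => f b - f (flp i b)) S = if i ∈ S then 2 * four f S else 0 := by
  have h1 : ∑ b, f (flp i b) * chi S b = ∑ b, f b * chi S (flp i b) := by
    rw [← sum_flp i (fun b => f b * chi S (flp i b))]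
    refine Finset.sum_congr rfl fun b _ => ?_
    rw [flp_flp i b]
  simp only [four, sub_mul, Finset.sum_sub_distrib]
  rw [h1]
  simp_rw [chi_flp]
  split_ifs <;> simp
  ring

theorem poincare_even {n : ℕ} (f : (Fin n → Bool) → ℝ) (hf : ∀ b, f (fun i => !b i) = f b) :
    8 * (2 ^ n * ∑ b, f b ^ 2 - (∑ b, f b) ^ 2)
      ≤ 2 ^ n * ∑ i, ∑ b, (f b - f (flp i b)) ^ 2 := by
  have h1 : 2 ^ n * ∑ i, ∑ b, (f b - f (flp i b)) ^ 2 =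
      ∑ S : Finset (Fin n), 4 * (S.card : ℝ) * four f S ^ 2 := by
    rw [Finset.mul_sum]
    simp_rw [← parseval (fun b => f b - f (flp _ b)), four_diff]
    rw [Finset.sum_comm]
    refine Finset.sum_congr rfl fun S _ => ?_
    simp [ite_pow]; ring
  have h0 : four f ∅ = ∑ b, f b := by simp [four, chi]
  have hs : ∀ i, four f {i} = 0 := by
    intro i
    have : four f {i} = - four f {i} := by
      have inv : Function.Involutive (fun (b : Fin n → Bool) => fun i => !b i) := by
        intro b; simp
      conv_lhs => rw [four, ← Equiv.sum_comp inv.toPerm]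
      rw [four, ← Finset.sum_neg_distrib]
      refine Finset.sum_congr rfl fun b _ => ?_
      simp [hf, chi, sg_not]
    linarith
  rw [h1, ← parseval, ← h0]
  have : (four f ∅)^2 = ∑ S : Finset (Fin n), if S = ∅ then four f S ^ 2 else 0 := by simp
  rw [this, ← Finset.sum_sub_distrib, Finset.mul_sum]
  refine Finset.sum_le_sum fun S _ => ?_
  by_cases hS : S = ∅
  · simp [hS]
  · rw [if_neg hS]
    by_cases h1 : S.card = 1
    · obtain ⟨i, rfl⟩ := Finset.card_eq_one.mp h1
      simp [hs]
    · have : 0 < S.card := Finset.card_pos.mpr (Finset.nonempty_iff_ne_empty.mpr hS)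
      have : (2:ℝ) ≤ S.card := by exact_mod_cast (by omega : 2 ≤ S.card)
      nlinarith [sq_nonneg (four f S)]

theorem partial_choose (n : ℕ) : ∀ j : ℕ, j ≤ n + 1 →
    ∑ k ∈ Finset.range j, (n.choose k : ℝ) * ((n:ℝ) - 2 * k) = j * n.choose j := by
  intro j
  induction j with
  | zero => simp
  | succ j ih =>
    intro hj
    rw [Finset.sum_range_succ, ih (by omega)]
    have := Nat.choose_succ_right_eq n j
    have h2 : (n.choose (j+1) : ℝ) * (j+1) = n.choose j * ((n:ℝ) - j) := by
      rw [← Nat.cast_sub (by omega)]; exact_mod_cast this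
    push_cast
    linarith

theorem abs_choose (m : ℕ) :
    ∑ k ∈ Finset.range (2*m+1), ((2*m).choose k : ℝ) * |((2*m : ℕ):ℝ) - 2 * k|
      = (2*m : ℕ) * (2*m).choose m := by
  have h1 := partial_choose (2*m) m (by omega)
  have h2 := partial_choose (2*m) (2*m+1) (by omega)
  rw [← Finset.sum_range_add_sum_Ico _ (by omega : m ≤ 2*m+1)] at h2 ⊢
  have e1 : ∑ k ∈ Finset.range m, ((2*m).choose k : ℝ) * |((2*m : ℕ):ℝ) - 2 * k| =
      ∑ k ∈ Finset.range m, ((2*m).choose k : ℝ) * (((2*m : ℕ):ℝ) - 2 * k) := by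
    refine Finset.sum_congr rfl fun k hk => ?_
    have : (k:ℝ) ≤ m := by exact_mod_cast (Finset.mem_range.mp hk).le
    rw [abs_of_nonneg]; push_cast; linarith
  have e2 : ∑ k ∈ Finset.Ico m (2*m+1), ((2*m).choose k : ℝ) * |((2*m : ℕ):ℝ) - 2 * k| =
      - ∑ k ∈ Finset.Ico m (2*m+1), ((2*m).choose k : ℝ) * (((2*m : ℕ):ℝ) - 2 * k) := by
    rw [← Finset.sum_neg_distrib]
    refine Finset.sum_congr rfl fun k hk => ?_
    have : (m:ℝ) ≤ k := by exact_mod_cast (Finset.mem_Ico.mp hk).1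
    rw [abs_of_nonpos]
    · ring
    · push_cast; linarith
  rw [e1, e2]
  simp only [Nat.choose_succ_self, Nat.cast_zero, mul_zero] at h2
  push_cast at *
  linarith

theorem sum_abs_sg (m : ℕ) :
    ∑ b : Fin (2*m) → Bool, |∑ l, sg (b l)| = (2*m : ℕ) * (2*m).choose m := by
  let e : Finset (Fin (2*m)) ≃ (Fin (2*m) → Bool) :=
    { toFun := fun S i => !decide (i ∈ S)
      invFun := fun b => Finset.univ.filter (fun i => !(b i))
      left_inv := by intro S; ext i; simp
      right_inv := by intro b; ext i; simp }
  rw [← Equiv.sum_comp e]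
  have h : ∀ S : Finset (Fin (2*m)), ∑ l, sg (e S l) = ((2*m : ℕ):ℝ) - 2 * S.card := by
    intro S
    have : ∀ l, sg (e S l) = 1 - 2 * (if l ∈ S then 1 else 0) := by
      intro l
      by_cases hl : l ∈ S <;> simp [e, sg, hl]; norm_num
    simp_rw [this]
    rw [Finset.sum_sub_distrib, ← Finset.mul_sum]
    simp
  simp_rw [h]
  have := Finset.sum_powerset_apply_card (x := (Finset.univ : Finset (Fin (2*m))))
    (fun k => |((2*m : ℕ):ℝ) - 2 * k|)
  rw [Finset.powerset_univ] at this
  rw [this, ← abs_choose]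
  simp

theorem sum_abs_sg_twist (m : ℕ) (a : Fin (2*m) → ℝ) (ha : ∀ i, a i = 1 ∨ a i = -1) :
    ∑ b : Fin (2*m) → Bool, |∑ l, a l * sg (b l)| = (2*m : ℕ) * (2*m).choose m := by
  classical
  rw [← sum_abs_sg]
  have inv : Function.Involutive
      (fun (b : Fin (2*m) → Bool) => fun i => if a i = 1 then b i else !b i) := by
    intro b; ext i; by_cases h : a i = 1 <;> simp [h]
  rw [← Equiv.sum_comp inv.toPerm]
  refine Finset.sum_congr rfl fun b _ => ?_
  congr 1
  refine Finset.sum_congr rfl fun i _ => ?_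
  rcases ha i with h | h
  · simp [h]
  · have : ¬ ((-1:ℝ) = 1) := by norm_num
    simp [h, this, sg_not]

section
variable {h : ℕ} (A : Matrix (Fin h) (Fin h) ℝ)

noncomputable def yv (b : Fin h → Bool) (k : Fin h) : ℝ := ∑ l, A l k * sg (b l)
noncomputable def wv (b : Fin h → Bool) (l : Fin h) : ℝ :=
  (h:ℝ)⁻¹ * ∑ k, sgn (yv A b k) * A l k
noncomputable def fv (b : Fin h → Bool) : ℝ := (h:ℝ)⁻¹ * ∑ k, |yv A b k|

theorem sgn_sq (x : ℝ) : sgn x * sgn x = 1 := by unfold sgn; split_ifs <;> simp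
theorem sgn_mul_le (x y : ℝ) : sgn x * y ≤ |y| := by
  unfold sgn; split_ifs
  · simpa using le_abs_self y
  · simpa using neg_le_abs y
theorem sgn_mul_self (x : ℝ) : sgn x * x = |x| := by
  unfold sgn; split_ifs with h
  · simp [abs_of_nonneg h]
  · simp [abs_of_neg (not_le.mp h)]

theorem w_dot (b b' : Fin h → Bool) :
    ∑ l, wv A b l * sg (b' l) = (h:ℝ)⁻¹ * ∑ k, sgn (yv A b k) * yv A b' k := by
  simp only [wv, mul_assoc, ← Finset.mul_sum, Finset.sum_mul]
  congr 1
  rw [Finset.sum_comm]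
  simp only [yv, Finset.mul_sum]

theorem w_dot_self (b : Fin h → Bool) : ∑ l, wv A b l * sg (b l) = fv A b := by
  rw [w_dot]; simp [sgn_mul_self, fv]

theorem w_dot_le (b b' : Fin h → Bool) : ∑ l, wv A b l * sg (b' l) ≤ fv A b' := by
  rw [w_dot, fv]
  gcongr
  exact sgn_mul_le _ _

theorem w_norm (hh : 4 ≤ h) (hA2 : Aᵀ * A = (h : ℝ) • 1) (b) : ∑ l, wv A b l ^ 2 = 1 := by
  have h0 : (h:ℝ) ≠ 0 := by positivity
  have hc : ∀ k k', ∑ l, A l k * A l k' = if k = k' then (h:ℝ) else 0 := by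
    intro k k'
    have := congrFun (congrFun hA2 k) k'
    simpa [Matrix.mul_apply, Matrix.one_apply] using this
  have : ∀ l, wv A b l ^ 2 = (h:ℝ)⁻¹ ^ 2 *
      ∑ k, ∑ k', sgn (yv A b k) * sgn (yv A b k') * (A l k * A l k') := by
    intro l
    rw [wv, mul_pow, sq (∑ k, _), Finset.sum_mul_sum]
    congr 1
    refine Finset.sum_congr rfl fun b _ => Finset.sum_congr rfl fun b' _ => ?_
    ring
  simp_rw [this]
  rw [← Finset.mul_sum, Finset.sum_comm]
  have : ∀ k, ∑ l, ∑ k', sgn (yv A b k) * sgn (yv A b k') * (A l k * A l k') = h := by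
    intro k
    rw [Finset.sum_comm]
    simp_rw [← Finset.mul_sum, hc]
    simp [sgn_sq]
  simp_rw [this]
  simp
  field_simp

theorem f_mean (h4 : 4 ∣ h) (hh : 4 ≤ h) (hA1 : ∀ i j, A i j = 1 ∨ A i j = -1) :
    ∑ b, fv A b = 2 ^ h * (mu h - 1) := by
  obtain ⟨m, rfl⟩ : ∃ m, h = 2 * m := ⟨h/2, by omega⟩
  have h0 : ((2*m : ℕ):ℝ) ≠ 0 := by positivity
  simp only [fv, ← Finset.mul_sum]
  rw [Finset.sum_comm]
  simp only [yv]
  rw [Finset.sum_congr rfl fun k _ => sum_abs_sg_twist m (fun l => A l k) (fun l => hA1 l k)]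
  have : 2 * m / 2 = m := by omega
  rw [mu, this, _root_.zpow_neg, zpow_natCast]
  simp only [Finset.sum_const, Finset.card_univ, Fintype.card_fin, nsmul_eq_mul]
  field_simp
  ring

theorem f_even (b : Fin h → Bool) : fv A (fun i => !b i) = fv A b := by
  simp [fv, yv, sg_not]

theorem f_diff (b : Fin h → Bool) (i : Fin h) :
    fv A b - fv A (flp i b) ≤ 2 * |wv A b i| := by
  have h1 := w_dot_le A b (flp i b)
  rw [← w_dot_self A b]
  have : ∑ l, wv A b l * sg (b l) - ∑ l, wv A b l * sg (flp i b l) = 2 * (wv A b i * sg (b i)) := by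
    rw [← Finset.sum_sub_distrib, Finset.sum_eq_single i]
    · simp [flp, sg_not]; ring
    · intro j _ hj; simp [flp, hj]
    · simp
  have h3 : wv A b i * sg (b i) ≤ |wv A b i| := by
    cases b i
    · simpa [sg] using neg_le_abs _
    · simpa [sg] using le_abs_self _
  linarith

theorem f_diff_sq (b : Fin h → Bool) (i : Fin h) :
    (fv A b - fv A (flp i b)) ^ 2 ≤ 4 * wv A b i ^ 2 + 4 * wv A (flp i b) i ^ 2 := by
  have h1 := f_diff A b i
  have h2 := f_diff A (flp i b) i
  rw [flp_flp i b] at h2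
  rw [← sq_abs (wv A b i), ← sq_abs (wv A (flp i b) i)]
  rcases le_total 0 (fv A b - fv A (flp i b)) with h | h
  · nlinarith [abs_nonneg (wv A b i), sq_nonneg |wv A (flp i b) i|]
  · nlinarith [abs_nonneg (wv A (flp i b) i), sq_nonneg |wv A b i|]

theorem f_var (h4 : 4 ∣ h) (hh : 4 ≤ h) (hA1 : ∀ i j, A i j = 1 ∨ A i j = -1)
    (hA2 : Aᵀ * A = (h : ℝ) • 1) :
    ∑ b, (fv A b - (mu h - 1)) ^ 2 ≤ 2 ^ h := by
  have hp := poincare_even (fv A) (f_even A)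
  have hD : ∑ i, ∑ b, (fv A b - fv A (flp i b)) ^ 2 ≤ 8 * 2 ^ h := by
    calc ∑ i, ∑ b, (fv A b - fv A (flp i b)) ^ 2
        ≤ ∑ i, ∑ b, (4 * wv A b i ^ 2 + 4 * wv A (flp i b) i ^ 2) :=
          Finset.sum_le_sum fun i _ => Finset.sum_le_sum fun b _ => f_diff_sq A b i
      _ = ∑ i, ∑ b, 8 * wv A b i ^ 2 := by
          refine Finset.sum_congr rfl fun i _ => ?_
          rw [Finset.sum_add_distrib, sum_flp i (fun b => 4 * wv A b i ^ 2),
            ← Finset.sum_add_distrib]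
          refine Finset.sum_congr rfl fun b _ => ?_
          ring
      _ = 8 * 2 ^ h := by
          rw [Finset.sum_comm]
          simp_rw [← Finset.mul_sum, w_norm A hh hA2]
          simp
  have hm := f_mean A h4 hh hA1
  set ν := mu h - 1
  have hP : (0:ℝ) < 2 ^ h := by positivity
  have e : ∑ b, (fv A b - ν) ^ 2 = ∑ b, fv A b ^ 2 - 2 ^ h * ν ^ 2 := by
    have : ∀ b, (fv A b - ν) ^ 2 = fv A b ^ 2 - 2 * ν * fv A b + ν ^ 2 := by intro b; ring
    simp_rw [this]
    rw [Finset.sum_add_distrib, Finset.sum_sub_distrib, ← Finset.mul_sum, hm]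
    simp
    ring
  rw [hm] at hp
  have h9 : 2 ^ h * (8 * (∑ b, fv A b ^ 2 - 2 ^ h * ν ^ 2)) ≤ 2 ^ h * (8 * 2 ^ h) := by
    have := mul_le_mul_of_nonneg_left hD hP.le
    nlinarith
  have := le_of_mul_le_mul_left h9 hP
  rw [e]; linarith

end

section
variable {h d : ℕ}

noncomputable def Bm (β : Fin d → Fin h → Bool) : Matrix (Fin h) (Fin d) ℝ :=
  Matrix.of fun l j => sg (β j l)

theorem F_eq (A : Matrix (Fin h) (Fin h) ℝ) (hh : 4 ≤ h)
    (hA2 : Aᵀ * A = (h : ℝ) • 1) (β : Fin d → Fin h → Bool) (i j : Fin d) :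
    Fmat A (Bm β) i j = ∑ l, wv A (β i) l * sg (β j l) := by
  have h0 : (h:ℝ) ≠ 0 := by positivity
  have hinv : A⁻¹ = (h:ℝ)⁻¹ • Aᵀ := by
    apply Matrix.inv_eq_left_inv
    rw [Matrix.smul_mul, hA2, smul_smul, inv_mul_cancel₀ h0, one_smul]
  rw [w_dot, Fmat, hinv, Matrix.mul_smul, Matrix.smul_mul, Matrix.mul_assoc]
  simp [Matrix.mul_apply, Cmat, Bm, yv]

theorem sum_off (A : Matrix (Fin h) (Fin h) ℝ) (hh : 4 ≤ h)
    (hA2 : Aᵀ * A = (h : ℝ) • 1) (i j : Fin d) (hij : i ≠ j) :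
    ∑ β : Fin d → Fin h → Bool, (∑ l, wv A (β i) l * sg (β j l)) ^ 2
      = Fintype.card (Fin d → Fin h → Bool) := by
  have e : ∀ β : Fin d → Fin h → Bool, (∑ l, wv A (β i) l * sg (β j l)) ^ 2 =
      ∑ k, ∑ l, wv A (β i) k * wv A (β i) l * (sg (β j k) * sg (β j l)) := by
    intro β
    rw [sq, Finset.sum_mul_sum]
    refine Finset.sum_congr rfl fun b _ => Finset.sum_congr rfl fun b' _ => ?_
    ring
  simp_rw [e]
  rw [Finset.sum_comm]
  have z : ∀ k, ∑ β : Fin d → Fin h → Bool,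
      ∑ l, wv A (β i) k * wv A (β i) l * (sg (β j k) * sg (β j l))
      = ∑ β : Fin d → Fin h → Bool, wv A (β i) k ^ 2 := by
    intro k
    rw [Finset.sum_comm, Finset.sum_eq_single k]
    · refine Finset.sum_congr rfl fun β _ => ?_
      rw [sg_sq]; ring
    · intro l _ hl
      have inv : Function.Involutive (fun (β : Fin d → Fin h → Bool) =>
          Function.update β j (flp k (β j))) := by
        intro β; simp [flp_flp k (β j)]
      have : ∀ x : ℝ, x = -x → x = 0 := by intro x hx; linarith
      apply this
      conv_lhs => rw [← Equiv.sum_comp inv.toPerm]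
      rw [← Finset.sum_neg_distrib]
      refine Finset.sum_congr rfl fun β _ => ?_
      simp [hij, flp, hl, sg_not]
    · simp
  simp_rw [z]
  rw [Finset.sum_comm]
  simp_rw [w_norm A hh hA2]
  simp

theorem sum_diag (i : Fin d) (φ : (Fin h → Bool) → ℝ) (hφ : ∑ b, φ b ≤ 2 ^ h) :
    ∑ β : Fin d → Fin h → Bool, φ (β i) ≤ Fintype.card (Fin d → Fin h → Bool) := by
  rw [Fintype.card_congr (Equiv.funSplitAt i (Fin h → Bool)),
    ← Equiv.sum_comp (Equiv.funSplitAt i (Fin h → Bool)).symm, Fintype.sum_prod_type]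
  simp only [Equiv.funSplitAt_symm_apply, dite_true, Finset.sum_const, Finset.card_univ,
    nsmul_eq_mul, Fintype.card_prod, Nat.cast_mul]
  rw [← Finset.mul_sum, mul_comm]
  apply mul_le_mul_of_nonneg_right _ (by positivity)
  simpa using hφ

theorem exists_good (A : Matrix (Fin h) (Fin h) ℝ) (h4 : 4 ∣ h) (hh : 4 ≤ h)
    (hA1 : ∀ i j, A i j = 1 ∨ A i j = -1)
    (hA2 : Aᵀ * A = (h : ℝ) • 1) :
    ∃ β : Fin d → Fin h → Bool,
      ∑ i, ∑ j, (Fmat A (Bm β) i j - if i = j then mu h - 1 else 0) ^ 2 ≤ (d:ℝ) ^ 2 := by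
  have : ∑ β : Fin d → Fin h → Bool,
      ∑ i, ∑ j, (Fmat A (Bm β) i j - if i = j then mu h - 1 else 0) ^ 2
      ≤ ∑ β : Fin d → Fin h → Bool, (d:ℝ) ^ 2 := by
    rw [Finset.sum_comm]
    have key : ∀ i j, ∑ β : Fin d → Fin h → Bool,
        (Fmat A (Bm β) i j - if i = j then mu h - 1 else 0) ^ 2
        ≤ Fintype.card (Fin d → Fin h → Bool) := by
      intro i j
      simp_rw [F_eq A hh hA2]
      by_cases hij : i = j
      · subst hij
        simp_rw [w_dot_self, if_true]
        exact sum_diag i (fun b => (fv A b - (mu h - 1)) ^ 2) (f_var A h4 hh hA1 hA2)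
      · simp only [hij, if_false, sub_zero]
        exact (sum_off A hh hA2 i j hij).le
    calc _ = ∑ i, ∑ j, ∑ β : Fin d → Fin h → Bool,
          (Fmat A (Bm β) i j - if i = j then mu h - 1 else 0) ^ 2 := by
            refine Finset.sum_congr rfl fun i _ => ?_
            rw [Finset.sum_comm]
      _ ≤ ∑ i : Fin d, ∑ j : Fin d, (Fintype.card (Fin d → Fin h → Bool) : ℝ) :=
          Finset.sum_le_sum fun i _ => Finset.sum_le_sum fun j _ => key i j
      _ = _ := by
          simp only [Finset.sum_const, Finset.card_univ, Fintype.card_fin, nsmul_eq_mul]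
          ring
  obtain ⟨β, _, hβ⟩ := Finset.exists_le_of_sum_le Finset.univ_nonempty this
  exact ⟨β, hβ⟩

theorem frob_bound (E : Matrix (Fin d) (Fin d) ℝ) (t : ℝ) (ht : 0 ≤ t)
    (hE : ∑ i, ∑ j, E i j ^ 2 ≤ t ^ 2) (x : Fin d → ℝ) :
    -(t * (x ⬝ᵥ x)) ≤ x ⬝ᵥ (E *ᵥ x) := by
  have h1 : (x ⬝ᵥ (E *ᵥ x)) ^ 2 ≤ (x ⬝ᵥ x) * ((E *ᵥ x) ⬝ᵥ (E *ᵥ x)) := by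
    have := Finset.sum_mul_sq_le_sq_mul_sq Finset.univ x (E *ᵥ x)
    simpa [dotProduct, sq] using this
  have h0 : 0 ≤ x ⬝ᵥ x := Finset.sum_nonneg fun i _ => mul_self_nonneg _
  have h2 : (E *ᵥ x) ⬝ᵥ (E *ᵥ x) ≤ (∑ i, ∑ j, E i j ^ 2) * (x ⬝ᵥ x) := by
    rw [Finset.sum_mul]
    refine Finset.sum_le_sum fun i _ => ?_
    have := Finset.sum_mul_sq_le_sq_mul_sq Finset.univ (E i) x
    simpa [dotProduct, sq, mulVec] using this
  have h3 : (x ⬝ᵥ (E *ᵥ x)) ^ 2 ≤ (t * (x ⬝ᵥ x)) ^ 2 := by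
    calc _ ≤ _ := h1
      _ ≤ (x ⬝ᵥ x) * (t ^ 2 * (x ⬝ᵥ x)) := by
        gcongr
        exact h2.trans (by gcongr)
      _ = _ := by ring
  exact (abs_le_of_sq_le_sq' h3 (by positivity)).1

end

/-- Let `d ≥ 1`, let `h ≥ 4` be a Hadamard order with Hadamard matrix `A`
(so `4 ∣ h`), and for `B ∈ {−1,1}^{h×d}` set `C = sgn(AᵀB)ᵀ`,
`F = C A⁻¹ B`, `G = F + I`.  Then there exists a choice of `B` such that
`det G ≥ μ(h)^d (1 − d²/μ(h))`. -/
theorem exists_B_det_G_lower_bound_Chebyshev (h d : ℕ)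
    (h4 : 4 ∣ h) (hh : 4 ≤ h) (hd : 1 ≤ d)
    (A : Matrix (Fin h) (Fin h) ℝ)
    (hA1 : ∀ i j, A i j = 1 ∨ A i j = -1)
    (hA2 : Aᵀ * A = (h : ℝ) • 1) :
    ∃ B : Matrix (Fin h) (Fin d) ℝ,
      (∀ i j, B i j = 1 ∨ B i j = -1) ∧
      (Fmat A B + 1).det ≥ mu h ^ d * (1 - (d : ℝ) ^ 2 / mu h) := by
  have hmu1 : 1 ≤ mu h := by
    unfold mu
    have : (0:ℝ) ≤ (2 : ℝ) ^ (-(h : ℤ)) * h * (h.choose (h / 2) : ℝ) := by positivity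
    linarith
  have hmu0 : 0 < mu h := by linarith
  have hsg : ∀ b, sg b = 1 ∨ sg b = -1 := by intro b; cases b <;> simp [sg]
  rcases lt_or_ge ((d:ℝ) ^ 2) (mu h) with hlt | hge
  · obtain ⟨β, hβ⟩ := exists_good (d := d) A h4 hh hA1 hA2
    refine ⟨Bm β, fun i j => hsg (β j i), ?_⟩
    have hd1 : (1:ℝ) ≤ d := by exact_mod_cast hd
    have hdm : (d:ℝ) < mu h := by nlinarith
    let E : Matrix (Fin d) (Fin d) ℝ := Fmat A (Bm β) - (mu h - 1) • 1
    have hE : ∑ i, ∑ j, E i j ^ 2 ≤ (d:ℝ) ^ 2 := by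
      refine le_of_eq_of_le ?_ hβ
      refine Finset.sum_congr rfl fun i _ => Finset.sum_congr rfl fun j _ => ?_
      simp [E, Matrix.one_apply]
    have hG : Fmat A (Bm β) + 1 = E + mu h • 1 := by
      simp only [E, sub_smul, one_smul]; abel
    have hdet := det_ge_of_coercive (mu h - d) (by linarith) d (Fmat A (Bm β) + 1) (by
      intro x
      rw [hG, Matrix.add_mulVec, dotProduct_add, Matrix.smul_mulVec, Matrix.one_mulVec,
        dotProduct_smul, smul_eq_mul]
      have := frob_bound E d (by positivity) hE x
      linarith)
    refine le_trans ?_ hdet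
    have hb := one_add_mul_le_pow (a := -((d:ℝ) / mu h)) (by
      have : (d:ℝ) / mu h ≤ 1 := (div_le_one hmu0).mpr hdm.le
      linarith) d
    have e : (mu h - d) ^ d = mu h ^ d * (1 + -((d:ℝ) / mu h)) ^ d := by
      rw [← mul_pow]; congr 1; field_simp; ring
    rw [e]
    apply mul_le_mul_of_nonneg_left _ (by positivity)
    refine le_of_eq_of_le ?_ hb
    ring
  · let β : Fin d → Fin h → Bool := fun _ _ => true
    refine ⟨Bm β, fun i j => hsg (β j i), ?_⟩
    have hdet := det_ge_of_coercive 1 one_pos d (Fmat A (Bm β) + 1) (by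
      intro x
      have hF : Fmat A (Bm β) *ᵥ x = fun _ => fv A (fun _ => true) * ∑ j, x j := by
        ext i
        rw [mulVec, dotProduct, Finset.mul_sum]
        refine Finset.sum_congr rfl fun j _ => ?_
        rw [F_eq A hh hA2, w_dot_self A (fun _ => true)]
      rw [Matrix.add_mulVec, dotProduct_add, Matrix.one_mulVec, hF]
      have h1 : x ⬝ᵥ (fun _ => fv A (fun _ => true) * ∑ j, x j) =
          fv A (fun _ => true) * (∑ j, x j) ^ 2 := by
        rw [dotProduct, ← Finset.sum_mul]; ring
      have h2 : 0 ≤ fv A (fun _ => true) := by unfold fv; positivity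
      rw [h1]
      nlinarith [mul_nonneg h2 (sq_nonneg (∑ j, x j))])
    have : 1 - (d:ℝ) ^ 2 / mu h ≤ 0 := by
      have := (one_le_div hmu0).mpr hge
      linarith
    have h3 := mul_nonpos_of_nonneg_of_nonpos (pow_nonneg hmu0.le d) this
    simp only [one_pow] at hdet
    linarith
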